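/- For every real ℓ > 0 and every θ > 0, there exists a strictly increasing sequence of primes (p_k) and a constant c > 0 such that ∑_k 1/p_k = ℓ and p_k ≥ c·θ^k for all k. -/

import Mathlib

open Filter Topology

lemma exists_G : ∃ G : ℂ → ℂ, ContinuousOn G {s | 1 ≤ s.re} ∧ ∀ s : ℂ, 1 < s.re →
    LSeries (fun n => (ArithmeticFunction.vonMangoldt n : ℂ)) s = 1 / (s - 1) + G s := by
  refine ⟨ArithmeticFunction.vonMangoldt.LFunctionResidueClassAux (1 : ZMod 1),
    ArithmeticFunction.vonMangoldt.continuousOn_LFunctionResidueClassAux _, fun s hs => ?_⟩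
  have h := ArithmeticFunction.vonMangoldt.eqOn_LFunctionResidueClassAux
    (q := 1) (a := 1) isUnit_one hs
  rw [h]
  have : ∀ n : ℕ, ArithmeticFunction.vonMangoldt.residueClass (1 : ZMod 1) n
      = ArithmeticFunction.vonMangoldt n := fun n => by
    simp [ArithmeticFunction.vonMangoldt.residueClass, Subsingleton.elim (n : ZMod 1) 1]
  simp [this]

lemma summable_np : Summable fun n : ℕ =>
    (if n.Prime then 0 else ArithmeticFunction.vonMangoldt n) / (n : ℝ) := by
  have h := ArithmeticFunction.vonMangoldt.summable_residueClass_non_primes_div (1 : ZMod 1)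
  have : ∀ n : ℕ, ArithmeticFunction.vonMangoldt.residueClass (1 : ZMod 1) n
      = ArithmeticFunction.vonMangoldt n := fun n => by
    simp [ArithmeticFunction.vonMangoldt.residueClass, Subsingleton.elim (n : ZMod 1) 1]
  simpa [this] using h

/-- Fejer kernel -/
noncomputable def fK (l v : ℝ) : ℝ := ∫ t in (0:ℝ)..l, 2 * (1 - t / l) * Real.cos (t * v)

lemma fK_eq {l v : ℝ} (hl : 0 < l) (hv : v ≠ 0) :
    fK l v = 2 * (1 - Real.cos (l * v)) / (l * v ^ 2) := by
  unfold fK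
  have : ∀ t ∈ Set.uIcc 0 l, HasDerivAt (fun t => 2 * ((1 - t / l) * (Real.sin (t * v) / v)
      - Real.cos (t * v) / (l * v ^ 2))) (2 * (1 - t / l) * Real.cos (t * v)) t := by
    intro t _
    have h1 : HasDerivAt (fun t => Real.sin (t * v)) (Real.cos (t * v) * v) t := by
      simpa using (((hasDerivAt_id t).mul_const v).sin)
    have h2 : HasDerivAt (fun t => Real.cos (t * v)) (-Real.sin (t * v) * v) t := by
      simpa using (((hasDerivAt_id t).mul_const v).cos)
    have h3 : HasDerivAt (fun t => 1 - t / l) (-(1 / l)) t := by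
      simpa using (((hasDerivAt_id t).div_const l).const_sub 1)
    have h := ((h3.mul (h1.div_const v)).sub (h2.div_const (l * v ^ 2))).const_mul 2
    refine h.congr_deriv ?_
    field_simp
    ring
  rw [intervalIntegral.integral_eq_sub_of_hasDerivAt this]
  · simp
    field_simp
    ring
  · apply Continuous.intervalIntegrable; fun_prop

lemma fK_zero {l : ℝ} (hl : 0 < l) : fK l 0 = l := by
  unfold fK
  simp only [mul_zero, Real.cos_zero, mul_one]
  rw [intervalIntegral.integral_const_mul, intervalIntegral.integral_sub, intervalIntegral.integral_div]
  · simp; field_simp; ring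
  · simp
  · apply Continuous.intervalIntegrable; fun_prop

lemma fK_nonneg {l : ℝ} (hl : 0 < l) (v : ℝ) : 0 ≤ fK l v := by
  rcases eq_or_ne v 0 with rfl | hv
  · rw [fK_zero hl]; exact hl.le
  · rw [fK_eq hl hv]
    have := Real.cos_le_one (l * v)
    have : 0 ≤ 1 - Real.cos (l * v) := by linarith
    positivity

lemma fK_le {l : ℝ} (hl : 0 < l) (v : ℝ) : fK l v ≤ l := by
  refine le_trans ?_ (fK_zero hl).le
  unfold fK
  apply intervalIntegral.integral_mono_on hl.le
  · apply Continuous.intervalIntegrable; fun_prop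
  · apply Continuous.intervalIntegrable; fun_prop
  · intro t ht
    simp only [mul_zero, Real.cos_zero]
    have : t / l ≤ 1 := (div_le_one hl).2 ht.2
    exact mul_le_mul_of_nonneg_left (Real.cos_le_one _) (by linarith)

lemma fK_ge {l : ℝ} (hl : 0 < l) {v : ℝ} (hv : |l * v| ≤ 1) : l / 2 ≤ fK l v := by
  have e : l / 2 = ∫ t in (0:ℝ)..l, 2 * (1 - t / l) * (1/2) := by
    rw [intervalIntegral.integral_mul_const]
    have := fK_zero hl
    unfold fK at this
    simp only [mul_zero, Real.cos_zero, mul_one] at this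
    rw [this]; ring
  rw [e]
  unfold fK
  apply intervalIntegral.integral_mono_on hl.le
  · apply Continuous.intervalIntegrable; fun_prop
  · apply Continuous.intervalIntegrable; fun_prop
  · intro t ht
    have : t / l ≤ 1 := (div_le_one hl).2 ht.2
    refine mul_le_mul_of_nonneg_left ?_ (by linarith)
    have h1 : |t * v| ≤ 1 := by
      refine le_trans ?_ hv
      rw [abs_mul, abs_mul, abs_of_nonneg ht.1, abs_of_pos hl]
      exact mul_le_mul_of_nonneg_right ht.2 (abs_nonneg _)
    have h2 := Real.one_sub_sq_div_two_le_cos (x := t * v)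
    have h3 : (t * v)^2 ≤ 1 := by rw [← sq_abs]; nlinarith [abs_nonneg (t*v)]
    linarith

lemma fK_le' {l : ℝ} (hl : 0 < l) {v : ℝ} (hv : v ≠ 0) : fK l v ≤ 4 / (l * v ^ 2) := by
  rw [fK_eq hl hv]
  have := Real.neg_one_le_cos (l * v)
  gcongr
  linarith

lemma fK_le_inv {l : ℝ} (hl : 1 ≤ l) (v : ℝ) : fK l v ≤ (l + 4) * (1 + v ^ 2)⁻¹ := by
  have h0 : 0 < l := by linarith
  rw [← div_eq_mul_inv, le_div_iff₀ (by positivity)]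
  rcases eq_or_ne v 0 with rfl | hv
  · rw [fK_zero h0]; linarith
  · have h1 := fK_le h0 v
    have h2 := fK_le' h0 hv
    rw [le_div_iff₀ (by positivity)] at h2
    have h3 := fK_nonneg h0 v
    have : fK l v * v ^ 2 ≤ 4 := by
      refine le_trans ?_ h2
      have : 0 ≤ fK l v * v ^ 2 := by positivity
      nlinarith
    linarith

lemma fK_cont (l : ℝ) : Continuous (fK l) := by
  unfold fK
  apply intervalIntegral.continuous_parametric_intervalIntegral_of_continuous'
  fun_prop

lemma fK_integrable {l : ℝ} (hl : 1 ≤ l) : MeasureTheory.Integrable (fK l) := by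
  refine (integrable_inv_one_add_sq.const_mul (l + 4)).mono' (fK_cont l).aestronglyMeasurable ?_
  refine Filter.Eventually.of_forall fun v => ?_
  rw [Real.norm_of_nonneg (fK_nonneg (by linarith) v)]
  exact fK_le_inv hl v

lemma fK_fourier {l : ℝ} (h0 : 0 < l) (v : ℝ) :
    ∫ t in (-l)..l, ((1 - |t| / l : ℝ) : ℂ) * Complex.exp (-(t * v : ℝ) * Complex.I) = (fK l v : ℂ) := by
  have ii : ∀ a b : ℝ, IntervalIntegrable (fun t : ℝ => ((1 - |t| / l : ℝ) : ℂ) *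
      Complex.exp (-(t * v : ℝ) * Complex.I)) MeasureTheory.volume a b := fun a b => by
    apply Continuous.intervalIntegrable; fun_prop
  rw [← intervalIntegral.integral_add_adjacent_intervals (ii (-l) 0) (ii 0 l)]
  have := intervalIntegral.integral_comp_neg (a := 0) (b := l) (fun t : ℝ => ((1 - |t| / l : ℝ) : ℂ) *
      Complex.exp (-(t * v : ℝ) * Complex.I))
  rw [neg_zero] at this
  rw [← this, ← intervalIntegral.integral_add]
  · unfold fK
    rw [← intervalIntegral.integral_ofReal]
    apply intervalIntegral.integral_congr_ae
    refine Filter.Eventually.of_forall fun t ht => ?_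
    rcases le_total 0 l with hl | hl
    · rw [Set.uIoc_of_le hl] at ht
      have : |t| = t := abs_of_pos ht.1
      simp only [abs_neg, this]
      push_cast
      rw [Complex.cos]
      ring_nf
    · exact absurd hl (not_le.2 h0)
  · apply Continuous.intervalIntegrable; fun_prop
  · exact ii _ _

/-- lower bound for combination -/
lemma fK_comb {d : ℝ} (hd : 0 < d) {l v : ℝ} (hl : 0 < l) (hv : d < |v|) :
    fK l v ≤ (10 * (1 + 1 / d) ^ 2) / l * (fK 1 v + fK 1 (v + 1)) := by
  have hv0 : v ≠ 0 := by rintro rfl; simp at hv; linarith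
  refine (fK_le' hl hv0).trans ?_
  have hM : 1 ≤ (1 + 1 / d) ^ 2 := one_le_pow₀ (by have : 0 < 1 / d := by positivity
                                                   linarith)
  have hM2 : (v + 1) ^ 2 ≤ (1 + 1 / d) ^ 2 * v ^ 2 := by
    rw [← mul_pow, sq_le_sq, abs_mul, abs_of_pos (by positivity : 0 < 1 + 1 / d)]
    have h1 : 1 ≤ 1 / d * |v| := by
      rw [one_div, ← div_eq_inv_mul, one_le_div hd]; exact hv.le
    calc |v + 1| ≤ |v| + 1 := by simpa using abs_add_le v 1
      _ ≤ _ := by linarith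
  generalize (1 + 1 / d) ^ 2 = M at *
  suffices h : 4 / v ^ 2 ≤ 10 * M * (fK 1 v + fK 1 (v + 1)) by
    calc 4 / (l * v ^ 2) = (4 / v ^ 2) / l := by field_simp
      _ ≤ (10 * M * (fK 1 v + fK 1 (v + 1))) / l := by gcongr
      _ = _ := by ring
  have hv2 : 0 < v ^ 2 := by positivity
  rcases eq_or_ne (v + 1) 0 with h1 | h1
  · rw [h1, fK_zero one_pos]
    have : v = -1 := by linarith
    have := fK_nonneg one_pos v
    subst v
    norm_num
    nlinarith
  · have a1 : 2 * (1 - Real.cos v) / (M * v ^ 2) ≤ fK 1 v := by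
      rw [fK_eq one_pos hv0, one_mul, one_mul]
      have : 0 ≤ 1 - Real.cos v := by linarith [Real.cos_le_one v]
      gcongr
      nlinarith
    have a2 : 2 * (1 - Real.cos (v + 1)) / (M * v ^ 2) ≤ fK 1 (v + 1) := by
      rw [fK_eq one_pos h1, one_mul, one_mul]
      have : 0 ≤ 1 - Real.cos (v + 1) := by linarith [Real.cos_le_one (v + 1)]
      gcongr
    have a3 : Real.cos v + Real.cos (v + 1) ≤ 1.8 := by
      have e1 : Real.cos v = Real.cos (v + 1/2) * Real.cos (1/2) + Real.sin (v + 1/2) * Real.sin (1/2) := by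
        rw [← Real.cos_sub]; ring_nf
      have e2 : Real.cos (v + 1) = Real.cos (v + 1/2) * Real.cos (1/2) - Real.sin (v + 1/2) * Real.sin (1/2) := by
        rw [← Real.cos_add]; ring_nf
      have e3 := Real.cos_bound (x := 1/2) (by norm_num [abs_of_pos])
      rw [abs_le] at e3
      have e4 : Real.cos (1/2) ≤ 0.9 := by
        have := e3.2
        rw [abs_of_pos (by norm_num)] at this
        norm_num at this ⊢
        linarith
      have e5 : 0 ≤ Real.cos (1/2) := Real.cos_nonneg_of_mem_Icc ⟨by linarith [Real.pi_gt_three], by linarith [Real.pi_gt_three]⟩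
      have e6 := Real.cos_le_one (v + 1/2)
      rw [e1, e2]
      nlinarith
    have hM0 : 0 < M := by linarith
    calc 4 / v ^ 2 = 10 * M * (2 * 0.2 / (M * v ^ 2)) := by field_simp; norm_num
      _ ≤ 10 * M * (2 * (2 - (Real.cos v + Real.cos (v + 1))) / (M * v ^ 2)) := by
        gcongr; linarith
      _ = 10 * M * (2 * (1 - Real.cos v) / (M * v ^ 2) + 2 * (1 - Real.cos (v + 1)) / (M * v ^ 2)) := by ring
      _ ≤ _ := by gcongr

noncomputable def fW (l x t : ℝ) : ℂ := ((1 - |t| / l : ℝ) : ℂ) * Complex.exp ((t * x : ℝ) * Complex.I)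

lemma fW_cont (l x : ℝ) : Continuous (fW l x) := by unfold fW; fun_prop

lemma fW_norm_le {l x t : ℝ} (hl : 0 < l) (ht : t ∈ Set.uIoc (-l) l) : ‖fW l x t‖ ≤ 1 := by
  rw [Set.uIoc_of_le (by linarith)] at ht
  unfold fW
  rw [norm_mul, Complex.norm_exp_ofReal_mul_I, mul_one, Complex.norm_real, Real.norm_eq_abs]
  have : |t| ≤ l := abs_le.2 ⟨ht.1.le, ht.2⟩
  have h1 : |t| / l ≤ 1 := (div_le_one hl).2 this
  have h2 : 0 ≤ |t| / l := by positivity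
  rw [abs_le]; constructor <;> linarith

lemma fW_mul (l x t u : ℝ) : fW l x t * Complex.exp (-(t * u : ℝ) * Complex.I) =
    ((1 - |t| / l : ℝ) : ℂ) * Complex.exp (-(t * (u - x) : ℝ) * Complex.I) := by
  unfold fW
  rw [mul_assoc, ← Complex.exp_add]
  congr 2
  push_cast; ring

open ArithmeticFunction in
lemma hasSum_S {l x σ : ℝ} (hl : 0 < l) (hσ : 1 < σ) :
    HasSum (fun n : ℕ => ((vonMangoldt n * (n : ℝ) ^ (-σ) * fK l (Real.log n - x) : ℝ) : ℂ))
      (∫ t in (-l)..l, fW l x t *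
        LSeries (fun n => (vonMangoldt n : ℂ)) (σ + t * Complex.I)) := by
  have hs0 : Summable (fun n : ℕ => vonMangoldt n * (n : ℝ) ^ (-σ)) := by
    have := LSeriesSummable_vonMangoldt (s := (σ : ℂ)) (by simpa using hσ)
    unfold LSeriesSummable at this
    refine this.norm.congr fun n => ?_
    rcases eq_or_ne n 0 with rfl | hn
    · simp
    · rw [LSeries.norm_term_eq, if_neg hn]
      simp only [Complex.ofReal_re, Complex.norm_real]
      rw [Real.norm_of_nonneg vonMangoldt_nonneg, Real.rpow_neg (by positivity), div_eq_mul_inv]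
  have key : ∀ n : ℕ, ∀ t : ℝ, LSeries.term (fun n => (vonMangoldt n : ℂ)) (σ + t * Complex.I) n =
      ((vonMangoldt n * (n : ℝ) ^ (-σ) : ℝ) : ℂ) * Complex.exp (-(t * Real.log n : ℝ) * Complex.I) := by
    intro n t
    rcases eq_or_ne n 0 with rfl | hn
    · simp
    · rw [LSeries.term_of_ne_zero hn, div_eq_mul_inv, ← Complex.cpow_neg, neg_add,
        Complex.cpow_add _ _ (by exact_mod_cast hn)]
      push_cast
      rw [mul_assoc]
      congr 2
      · rw [Complex.ofReal_cpow (by positivity)]; push_cast; rfl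
      · rw [Complex.cpow_def_of_ne_zero (by exact_mod_cast hn), ← Complex.natCast_log]
        congr 1; ring
  have := intervalIntegral.hasSum_integral_of_dominated_convergence (a := -l) (b := l)
    (μ := MeasureTheory.volume)
    (F := fun (n : ℕ) t => fW l x t * (((vonMangoldt n * (n : ℝ) ^ (-σ) : ℝ) : ℂ) * Complex.exp (-(t * Real.log n : ℝ) * Complex.I)))
    (f := fun t => fW l x t *
        LSeries (fun n => (vonMangoldt n : ℂ)) (σ + t * Complex.I))
    (fun n _ => vonMangoldt n * (n : ℝ) ^ (-σ)) ?_ ?_ ?_ ?_ ?_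
  · convert! this using 2 with n
    rw [Complex.ofReal_mul, ← fK_fourier hl, ← intervalIntegral.integral_const_mul]
    congr 1
    ext t
    rw [← fW_mul]
    ring
  · intro n
    apply Continuous.aestronglyMeasurable
    have := fW_cont l x
    fun_prop
  · intro n
    refine .of_forall fun t ht => ?_
    rw [norm_mul, norm_mul]
    have h1 := fW_norm_le (x := x) hl ht
    have h2 : ‖Complex.exp (-(t * Real.log n : ℝ) * Complex.I)‖ = 1 := by
      rw [← Complex.ofReal_neg, Complex.norm_exp_ofReal_mul_I]
    have h4 : 0 ≤ vonMangoldt n * (n : ℝ) ^ (-σ) := mul_nonneg vonMangoldt_nonneg (by positivity)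
    rw [h2, Complex.norm_real, Real.norm_of_nonneg h4, mul_one]
    exact mul_le_of_le_one_left h4 h1
  · exact .of_forall fun t _ => hs0
  · simp
  · refine .of_forall fun t ht => ?_
    apply HasSum.mul_left
    have := (LSeriesSummable_vonMangoldt (s := σ + t * Complex.I) (by simpa using hσ)).LSeriesHasSum
    unfold LSeriesHasSum at this
    exact this.congr_fun fun n => (key n t).symm

lemma J_identity {l x σ : ℝ} (hl : 0 < l) (hσ : 1 < σ) :
    ∫ t in (-l)..l, fW l x t * (1 / ((σ + t * Complex.I) - 1)) =
    ((∫ u in Set.Ioi (0 : ℝ), Real.exp (-(σ - 1) * u) * fK l (u - x) : ℝ) : ℂ) := by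
  have h1 : ∀ t : ℝ, 1 / ((σ + t * Complex.I) - 1) =
      ∫ u in Set.Ioi (0 : ℝ), Complex.exp (-(σ - 1 + t * Complex.I) * u) := by
    intro t
    rw [integral_exp_mul_complex_Ioi (by simpa using hσ)]
    simp
    rw [neg_div, ← div_neg, one_div]
    congr 1
    ring
  simp_rw [h1, ← MeasureTheory.integral_const_mul]
  rw [intervalIntegral.integral_of_le (by linarith), MeasureTheory.integral_integral_swap]
  · rw [← integral_complex_ofReal]
    congr 1
    ext u
    push_cast
    rw [← fK_fourier hl, ← intervalIntegral.integral_of_le (by linarith), ← intervalIntegral.integral_const_mul]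
    congr 1
    ext t
    rw [← fW_mul, mul_left_comm, ← Complex.exp_add]
    congr 2
    push_cast
    ring
  · have i1 : MeasureTheory.Integrable (fun t => ‖fW l x t‖)
        (MeasureTheory.volume.restrict (Set.Ioc (-l) l)) :=
      ((fW_cont l x).norm.integrableOn_Icc (a := -l) (b := l)).mono_set Set.Ioc_subset_Icc_self
    have i2 : MeasureTheory.Integrable (fun u : ℝ => Real.exp (-(σ - 1) * u))
        (MeasureTheory.volume.restrict (Set.Ioi 0)) :=
      integrableOn_exp_mul_Ioi (by linarith) 0
    refine (i1.mul_prod i2).mono' ?_ (.of_forall fun p => ?_)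
    · apply Continuous.aestronglyMeasurable
      have := fW_cont l x
      unfold Function.uncurry
      fun_prop
    · simp only [Function.uncurry]
      rw [norm_mul, Complex.norm_exp]
      apply le_of_eq
      congr 2
      simp

lemma fW_G {l : ℝ} (hl : 0 < l) {G : ℂ → ℂ} (hG : ContinuousOn G {s | 1 ≤ s.re}) (η : ℝ) (hη : 0 < η) :
    ∃ X : ℝ, ∀ x ≥ X, ∀ᶠ σ : ℝ in 𝓝[>] 1, ‖∫ t in (-l)..l, fW l x t * G (σ + t * Complex.I)‖ < η := by
  have hc : Continuous (fun p : ℝ × ℝ => G ((max p.1 1 : ℝ) + p.2 * Complex.I)) := by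
    refine hG.comp_continuous (by fun_prop) fun p => ?_
    simp
  have hR : Tendsto (fun x : ℝ => ∫ t in (-l)..l, fW l x t * G ((1:ℝ) + t * Complex.I)) atTop (𝓝 0) := by
    have := Real.tendsto_integral_exp_smul_cocompact ((Set.Ioc (-l) l).indicator
      (fun t : ℝ => ((1 - |t| / l : ℝ) : ℂ) * G ((1:ℝ) + t * Complex.I)))
    have hm : Tendsto (fun x : ℝ => - (x / (2 * Real.pi))) atTop (cocompact ℝ) := by
      refine Tendsto.mono_right ?_ atBot_le_cocompact
      exact tendsto_neg_atTop_atBot.comp (tendsto_id.atTop_div_const (by positivity))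
    refine (this.comp hm).congr fun x => ?_
    simp only [Function.comp]
    rw [intervalIntegral.integral_of_le (by linarith), ← MeasureTheory.integral_indicator measurableSet_Ioc]
    congr 1
    ext t
    by_cases ht : t ∈ Set.Ioc (-l) l
    · simp only [Set.indicator_of_mem ht, Circle.smul_def, Real.fourierChar_apply, smul_eq_mul]
      unfold fW
      have : 2 * Real.pi * -(t * -(x / (2 * Real.pi))) = t * x := by
        field_simp
      rw [this]
      ring
    · simp [Set.indicator_of_notMem ht]
  obtain ⟨X, hX⟩ := eventually_atTop.1 ((hR.norm).eventually_lt_const (by simpa using hη))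
  refine ⟨X, fun x hx => ?_⟩
  have hcont : Continuous (fun σ : ℝ => ∫ t in (-l)..l, fW l x t * G ((max σ 1 : ℝ) + t * Complex.I)) := by
    apply intervalIntegral.continuous_parametric_intervalIntegral_of_continuous'
    have := fW_cont l x
    exact (this.comp continuous_snd).mul hc
  have h1 : ∀ᶠ σ : ℝ in 𝓝 1, ‖∫ t in (-l)..l, fW l x t * G ((max σ 1 : ℝ) + t * Complex.I)‖ < η := by
    apply (hcont.norm.tendsto 1).eventually_lt_const
    simpa using hX x hx
  filter_upwards [h1.filter_mono nhdsWithin_le_nhds, self_mem_nhdsWithin] with σ h2 h3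
  rwa [max_eq_left (le_of_lt h3)] at h2

noncomputable def fJ (l σ x : ℝ) : ℝ := ∫ u in Set.Ioi (0 : ℝ), Real.exp (-(σ - 1) * u) * fK l (u - x)

noncomputable def fS (l σ x : ℝ) (n : ℕ) : ℝ :=
  ArithmeticFunction.vonMangoldt n * (n : ℝ) ^ (-σ) * fK l (Real.log n - x)

lemma main_asym {l : ℝ} (hl : 1 ≤ l) (η : ℝ) (hη : 0 < η) :
    ∃ X : ℝ, ∀ x ≥ X, ∀ᶠ σ : ℝ in 𝓝[>] 1, Summable (fS l σ x) ∧ |∑' n, fS l σ x n - fJ l σ x| < η := by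
  have hl0 : 0 < l := by linarith
  obtain ⟨G, hG, hGL⟩ := exists_G
  obtain ⟨X, hX⟩ := fW_G hl0 hG η hη
  refine ⟨X, fun x hx => ?_⟩
  filter_upwards [hX x hx, self_mem_nhdsWithin] with σ h1 hσ
  have hσ : 1 < σ := hσ
  have hS := hasSum_S (x := x) hl0 hσ
  have hJ := J_identity (x := x) hl0 hσ
  have hre : ∀ t : ℝ, 1 < ((σ : ℂ) + t * Complex.I).re := fun t => by simpa using hσ
  have hsplit : ∫ t in (-l)..l, fW l x t *
        LSeries (fun n => (ArithmeticFunction.vonMangoldt n : ℂ)) (σ + t * Complex.I) =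
      (fJ l σ x : ℂ) + ∫ t in (-l)..l, fW l x t * G (σ + t * Complex.I) := by
    unfold fJ
    rw [← hJ, ← intervalIntegral.integral_add]
    · congr 1
      ext t
      rw [hGL _ (hre t), mul_add]
    · apply Continuous.intervalIntegrable
      refine (fW_cont l x).mul (continuous_const.div (by fun_prop) fun t h => ?_)
      have := congrArg Complex.re h
      simp at this
      linarith
    · apply Continuous.intervalIntegrable
      refine (fW_cont l x).mul (hG.comp_continuous (by fun_prop) fun t => (hre t).le)
  have hS' := Complex.reCLM.hasSum hS
  have e : HasSum (fS l σ x) (fJ l σ x + (∫ t in (-l)..l, fW l x t * G (σ + t * Complex.I)).re) := by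
    rw [hsplit] at hS'
    simpa [Function.comp_def, fS] using! hS'
  refine ⟨e.summable, ?_⟩
  rw [e.tsum_eq, add_sub_cancel_left]
  exact (Complex.abs_re_le_norm _).trans_lt h1

lemma fJ_integrable {l : ℝ} (hl : 1 ≤ l) {σ : ℝ} (hσ : 1 < σ) (x : ℝ) :
    MeasureTheory.IntegrableOn (fun u => Real.exp (-(σ - 1) * u) * fK l (u - x)) (Set.Ioi 0) := by
  have := ((fK_integrable hl).comp_sub_right x).integrableOn (s := Set.Ioi (0:ℝ))
  refine MeasureTheory.Integrable.mono' this ?_ ?_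
  · apply Continuous.aestronglyMeasurable
    have := fK_cont l
    fun_prop
  · refine (MeasureTheory.ae_restrict_mem measurableSet_Ioi).mono fun u hu => ?_
    have h1 := fK_nonneg (l := l) (by linarith) (u - x)
    rw [Real.norm_of_nonneg (by positivity)]
    refine mul_le_of_le_one_left h1 (Real.exp_le_one_iff.2 ?_)
    have : 0 < u := hu
    nlinarith

lemma fJ_le {l : ℝ} (hl : 1 ≤ l) {σ : ℝ} (hσ : 1 < σ) (x : ℝ) : fJ l σ x ≤ ∫ u, fK l u := by
  rw [← MeasureTheory.integral_sub_right_eq_self (fK l) x]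
  have hi := (fK_integrable hl).comp_sub_right x
  have hn : ∀ u, 0 ≤ fK l (u - x) := fun u => fK_nonneg (by linarith) _
  refine le_trans ?_ (MeasureTheory.setIntegral_le_integral (s := Set.Ioi 0) hi (.of_forall hn))
  unfold fJ
  refine MeasureTheory.setIntegral_mono_on (fJ_integrable hl hσ x) hi.integrableOn measurableSet_Ioi ?_
  intro u hu
  refine mul_le_of_le_one_left (hn u) (Real.exp_le_one_iff.2 ?_)
  have : 0 < u := hu
  nlinarith

lemma fJ_ge {l : ℝ} (hl : 1 ≤ l) {σ : ℝ} (hσ : 1 < σ) {x : ℝ} (hx : 0 ≤ x) :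
    Real.exp (-(σ - 1) * (x + 1)) / 2 ≤ fJ l σ x := by
  have hl0 : 0 < l := by linarith
  have hi := fJ_integrable hl hσ x
  have hsub : Set.Ioc x (x + 1 / l) ⊆ Set.Ioi 0 := fun u hu => lt_of_le_of_lt hx hu.1
  have h1 : ∫ u in Set.Ioc x (x + 1 / l), Real.exp (-(σ - 1) * u) * fK l (u - x) ≤ fJ l σ x := by
    refine MeasureTheory.setIntegral_mono_set hi (.of_forall fun u => ?_) hsub.eventuallyLE
    exact mul_nonneg (Real.exp_nonneg _) (fK_nonneg hl0 _)
  refine le_trans ?_ h1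
  have h2 : ∫ u in Set.Ioc x (x + 1 / l), (Real.exp (-(σ - 1) * (x + 1)) * (l / 2))
      = Real.exp (-(σ - 1) * (x + 1)) / 2 := by
    rw [MeasureTheory.setIntegral_const]
    have : (0:ℝ) ≤ 1 / l := by positivity
    simp [MeasureTheory.measureReal_def, hl0.le]
    field_simp
  rw [← h2]
  refine MeasureTheory.setIntegral_mono_on (continuous_const.integrableOn_Ioc) (hi.mono_set hsub) measurableSet_Ioc ?_
  intro u hu
  have h3 : 1 / l ≤ 1 := (div_le_one hl0).2 hl
  have h4 : l / 2 ≤ fK l (u - x) := by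
    apply fK_ge hl0
    rw [abs_of_nonneg (mul_nonneg hl0.le (by linarith [hu.1]))]
    calc l * (u - x) ≤ l * (1 / l) := by gcongr; linarith [hu.2]
      _ = 1 := by field_simp
  have h5 : Real.exp (-(σ - 1) * (x + 1)) ≤ Real.exp (-(σ - 1) * u) := by
    apply Real.exp_le_exp.2
    nlinarith [hu.2]
  gcongr

lemma prime_near {d : ℝ} (hd : 0 < d) :
    ∃ X : ℝ, ∀ x ≥ X, ∃ p : ℕ, p.Prime ∧ |Real.log p - x| ≤ d := by
  obtain ⟨X1, hX1⟩ := main_asym le_rfl 1 one_pos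
  set B : ℝ := (∫ u, fK 1 u) + 1 with hB
  have hB1 : 1 ≤ B := by
    have : 0 ≤ ∫ u, fK 1 u := MeasureTheory.integral_nonneg fun u => fK_nonneg one_pos u
    linarith
  set D : ℝ := 10 * (1 + 1 / d) ^ 2 with hD
  have hD0 : 0 < D := by positivity
  set l : ℝ := max 1 (16 * D * B) with hldef
  have hl : 1 ≤ l := le_max_left _ _
  have hl0 : 0 < l := by linarith
  have hl2 : 16 * D * B ≤ l := le_max_right _ _
  obtain ⟨X2, hX2⟩ := main_asym hl (1/16) (by norm_num)
  set f : ℕ → ℝ := fun n : ℕ =>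
    (if n.Prime then 0 else ArithmeticFunction.vonMangoldt n) / (n : ℝ) with hf
  have hf0 : ∀ n, 0 ≤ f n := fun n => by
    simp only [hf]
    split_ifs
    · simp
    · exact div_nonneg ArithmeticFunction.vonMangoldt_nonneg (by positivity)
  have hfs : Summable f := summable_np
  obtain ⟨N, hN⟩ : ∃ N : ℕ, ∑' n, (Set.Ici N).indicator f n < 1 / (8 * l) := by
    have h1 := tendsto_sum_nat_add f
    obtain ⟨N, hN⟩ := (h1.eventually_lt_const (show 0 < 1 / (8 * l) by positivity)).exists
    refine ⟨N, ?_⟩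
    have h2 := (hfs.indicator (Set.Ici N)).sum_add_tsum_nat_add N
    rw [← h2, Finset.sum_eq_zero, zero_add]
    · refine lt_of_eq_of_lt (tsum_congr fun n => ?_) hN
      exact Set.indicator_of_mem (Set.mem_Ici.2 (by omega)) f
    · intro i hi
      simp at hi ⊢
      omega
  refine ⟨max (max (X1 + 1) X2) (max 0 (Real.log N + d + 1)), fun x hx => ?_⟩
  simp only [ge_iff_le, max_le_iff] at hx
  obtain ⟨⟨hx1, hx2⟩, hx0, hxN⟩ := hx
  by_contra! hcon
  have hexp : ∀ᶠ σ : ℝ in 𝓝[>] 1, 1 - 1/16 < Real.exp (-(σ - 1) * (x + 1)) := by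
    have : Continuous fun σ : ℝ => Real.exp (-(σ - 1) * (x + 1)) := by fun_prop
    exact ((this.tendsto 1).eventually_const_lt (by norm_num)).filter_mono nhdsWithin_le_nhds
  have hmem : ∀ᶠ σ : ℝ in 𝓝[>] 1, σ ∈ Set.Ioi (1 : ℝ) := self_mem_nhdsWithin
  obtain ⟨σ, hσ, ⟨s1, e1⟩, ⟨s2, e2⟩, ⟨s3, e3⟩, he⟩ := (hmem.and
    ((hX1 x (by linarith)).and ((hX1 (x - 1) (by linarith)).and ((hX2 x hx2).and hexp)))).exists
  have hσ : 1 < σ := hσ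
  rw [abs_lt] at e1 e2 e3
  have j1 := fJ_le le_rfl hσ x
  have j2 := fJ_le le_rfl hσ (x - 1)
  have j3 := fJ_ge hl hσ hx0
  have hterm : ∀ n, fS l σ x n ≤ l * (Set.Ici N).indicator f n + D / l * (fS 1 σ x n + fS 1 σ (x - 1) n) := by
    intro n
    have hc : 0 ≤ ArithmeticFunction.vonMangoldt n * (n : ℝ) ^ (-σ) :=
      mul_nonneg ArithmeticFunction.vonMangoldt_nonneg (by positivity)
    have hi : 0 ≤ (Set.Ici N).indicator f n := Set.indicator_nonneg (fun n _ => hf0 n) n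
    have hs : 0 ≤ fS 1 σ x n + fS 1 σ (x - 1) n :=
      add_nonneg (mul_nonneg hc (fK_nonneg one_pos _)) (mul_nonneg hc (fK_nonneg one_pos _))
    rcases lt_or_ge d |Real.log n - x| with h | h
    · have := mul_le_mul_of_nonneg_left (fK_comb hd hl0 h) hc
      have e : Real.log n - x + 1 = Real.log n - (x - 1) := by ring
      rw [e] at this
      have : fS l σ x n ≤ D / l * (fS 1 σ x n + fS 1 σ (x - 1) n) := by
        unfold fS
        linarith
      have : 0 ≤ l * (Set.Ici N).indicator f n := by positivity
      linarith
    · have hnp : ¬ n.Prime := fun hp => absurd (hcon n hp) (not_lt.2 h)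
      have : 0 ≤ D / l * (fS 1 σ x n + fS 1 σ (x - 1) n) := by positivity
      suffices fS l σ x n ≤ l * (Set.Ici N).indicator f n by linarith
      rcases Nat.eq_zero_or_pos n with rfl | hn
      · simp only [fS, ArithmeticFunction.map_zero, zero_mul]; positivity
      have hnN : N ≤ n := by
        by_contra! hlt
        have : Real.log n ≤ Real.log N := Real.log_le_log (by exact_mod_cast hn) (by exact_mod_cast hlt.le)
        have := (abs_le.1 h).1
        linarith
      rw [Set.indicator_of_mem (Set.mem_Ici.2 hnN)]
      simp only [hf, if_neg hnp, fS]
      have h1 : (n : ℝ) ^ (-σ) ≤ (n : ℝ)⁻¹ := by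
        rw [← Real.rpow_neg_one]
        exact Real.rpow_le_rpow_of_exponent_le (by exact_mod_cast hn) (by linarith)
      have hL := ArithmeticFunction.vonMangoldt_nonneg (n := n)
      calc _ ≤ ArithmeticFunction.vonMangoldt n * (n : ℝ)⁻¹ * l := by
            have := fK_le hl0 (Real.log n - x)
            have := fK_nonneg hl0 (Real.log n - x)
            gcongr
        _ = _ := by ring
  have hsum := s3.tsum_le_tsum hterm
    (((hfs.indicator (Set.Ici N)).mul_left l).add ((s1.add s2).mul_left (D / l)))
  rw [((hfs.indicator (Set.Ici N)).mul_left l).tsum_add ((s1.add s2).mul_left (D / l)),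
    tsum_mul_left, tsum_mul_left, s1.tsum_add s2] at hsum
  have t1 : l * ∑' n, (Set.Ici N).indicator f n ≤ 1 / 8 := by
    calc _ ≤ l * (1 / (8 * l)) := by gcongr
      _ = 1 / 8 := by field_simp
  have t2 : D / l * (∑' n, fS 1 σ x n + ∑' n, fS 1 σ (x - 1) n) ≤ 1 / 8 := by
    calc _ ≤ D / l * (B + B) := by gcongr <;> linarith
      _ ≤ 1 / 8 := by
        rw [div_mul_eq_mul_div, div_le_iff₀ hl0]; linarith
  linarith

lemma prime_gap {ε : ℝ} (hε : 0 < ε) :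
    ∃ N : ℝ, 1 ≤ N ∧ ∀ y ≥ N, ∃ p : ℕ, p.Prime ∧ y < p ∧ (p : ℝ) ≤ (1 + ε) * y := by
  have hd : 0 < Real.log (1 + ε) / 3 := by
    have := Real.log_pos (show 1 < 1 + ε by linarith)
    positivity
  set d := Real.log (1 + ε) / 3 with hdef
  obtain ⟨X, hX⟩ := prime_near hd
  refine ⟨max 1 (Real.exp X), le_max_left _ _, fun y hy => ?_⟩
  have hy0 : 0 < y := by linarith [le_max_left 1 (Real.exp X)]
  have hyX : X ≤ Real.log y := (Real.le_log_iff_exp_le hy0).2 (le_trans (le_max_right _ _) hy)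
  obtain ⟨p, hp, h⟩ := hX (Real.log y + 2 * d) (by linarith)
  rw [abs_le] at h
  have hp0 : (0:ℝ) < p := by exact_mod_cast hp.pos
  refine ⟨p, hp, (Real.log_lt_log_iff hy0 hp0).1 (by linarith), ?_⟩
  rw [← Real.log_le_log_iff hp0 (by positivity), Real.log_mul (by positivity) hy0.ne']
  linarith

/-- Greedy stage: a small remainder is a sum of reciprocals of sparse primes. -/
lemma greedy {θ : ℝ} (hθ : 2 ≤ θ) : ∃ N : ℝ, 1 ≤ N ∧ ∀ r : ℝ, 0 < r → r ≤ 1 / N →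
    ∃ p : ℕ → ℕ, StrictMono p ∧ (∀ k, (p k).Prime) ∧ HasSum (fun k => (1 : ℝ) / (p k)) r ∧
      ∀ k, θ ^ k / r ≤ (p k : ℝ) := by
  have hθ0 : 0 < θ := by linarith
  obtain ⟨N, hN1, hN⟩ := prime_gap (ε := 1 / θ) (by positivity)
  refine ⟨N, hN1, fun r hr hrN => ?_⟩
  have hstep : ∀ s : ℝ, ∃ p : ℕ, 0 < s → s ≤ 1 / N → p.Prime ∧ 1 / s < p ∧ (p : ℝ) ≤ (1 + 1 / θ) * (1 / s) := by
    intro s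
    by_cases h : 0 < s ∧ s ≤ 1 / N
    · obtain ⟨p, hp⟩ := hN (1 / s) (by rw [ge_iff_le, le_div_iff₀ h.1]; rw [le_div_iff₀ (by linarith)] at h; linarith [h.2])
      exact ⟨p, fun _ _ => hp⟩
    · exact ⟨0, fun h1 h2 => absurd ⟨h1, h2⟩ h⟩
  choose q hq using hstep
  let R : ℕ → ℝ := fun k => Nat.rec r (fun _ s => s - 1 / (q s : ℝ)) k
  have hR0 : R 0 = r := rfl
  have hRs : ∀ k, R (k + 1) = R k - 1 / (q (R k) : ℝ) := fun k => rfl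
  have hstep2 : ∀ s : ℝ, 0 < s → s ≤ 1 / N → 0 < s - 1 / (q s : ℝ) ∧ s - 1 / (q s : ℝ) ≤ s / θ := by
    intro s h1 h2
    obtain ⟨hp, h3, h4⟩ := hq s h1 h2
    have hp0 : (0:ℝ) < q s := by exact_mod_cast hp.pos
    constructor
    · have := (one_div_lt h1 hp0).1 h3
      linarith
    · have : s / (1 + 1 / θ) ≤ 1 / (q s : ℝ) := by
        rw [div_le_div_iff₀ (by positivity) hp0]
        calc s * q s ≤ s * ((1 + 1 / θ) * (1 / s)) := by gcongr
          _ = _ := by field_simp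
      have h5 : s - s / (1 + 1 / θ) ≤ s / θ := by
        have : s - s / (1 + 1 / θ) = s / (θ + 1) := by field_simp; ring
        rw [this]
        gcongr
        linarith
      linarith
  have hinv : ∀ k, 0 < R k ∧ R k ≤ 1 / N ∧ R k ≤ r / θ ^ k := by
    intro k
    induction k with
    | zero => exact ⟨hr, hrN, by simp [hR0]⟩
    | succ k ih =>
      obtain ⟨i1, i2, i3⟩ := ih
      obtain ⟨j1, j2⟩ := hstep2 _ i1 i2
      rw [hRs]
      refine ⟨j1, ?_, ?_⟩
      · have : 0 ≤ 1 / (q (R k) : ℝ) := by positivity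
        linarith
      · calc _ ≤ R k / θ := j2
          _ ≤ r / θ ^ k / θ := by gcongr
          _ = _ := by rw [pow_succ]; field_simp
  have hQ := fun k => hq (R k) (hinv k).1 (hinv k).2.1
  refine ⟨fun k => q (R k), strictMono_nat_of_lt_succ fun k => ?_, fun k => (hQ k).1, ?_, fun k => ?_⟩
  · have h1 := (hQ k).2.2
    have h2 := (hQ (k + 1)).2.1
    have h3 := (hstep2 _ (hinv k).1 (hinv k).2.1).2
    rw [← hRs] at h3
    have : (q (R k) : ℝ) < q (R (k + 1)) := by
      refine (h1.trans ?_).trans_lt h2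
      calc (1 + 1 / θ) * (1 / R k) ≤ θ * (1 / R k) := by
            have := (hinv k).1
            have h5 : 1 / θ ≤ 1 := (div_le_one hθ0).2 (by linarith)
            gcongr
            linarith
        _ = 1 / (R k / θ) := by field_simp
        _ ≤ _ := one_div_le_one_div_of_le (hinv (k + 1)).1 h3
    exact_mod_cast this
  · rw [hasSum_iff_tendsto_nat_of_nonneg (fun k => by positivity)]
    have h1 : ∀ n, ∑ i ∈ Finset.range n, (1 : ℝ) / (q (R i)) = r - R n := by
      intro n
      induction n with
      | zero => simp [hR0]
      | succ n ih => rw [Finset.sum_range_succ, ih, hRs]; ring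
    simp_rw [h1]
    have h2 : Tendsto R atTop (𝓝 0) := by
      refine squeeze_zero (fun k => (hinv k).1.le) (fun k => (hinv k).2.2) ?_
      exact (tendsto_pow_atTop_atTop_of_one_lt (by linarith)).const_div_atTop r
    simpa using h2.const_sub r
  · refine le_trans ?_ (hQ k).2.1.le
    have := (hinv k).2.2
    have h0 := (hinv k).1
    calc θ ^ k / r = 1 / (r / θ ^ k) := by field_simp
      _ ≤ _ := one_div_le_one_div_of_le h0 this

lemma initial {ℓ N : ℝ} (hℓ : 0 < ℓ) (hN : 1 ≤ N) : ∃ (m : ℕ) (q : ℕ → ℕ), StrictMono q ∧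
    (∀ k, (q k).Prime) ∧ N ≤ q m ∧ ∑ i ∈ Finset.range m, (1 : ℝ) / q i < ℓ ∧
      ℓ ≤ ∑ i ∈ Finset.range (m + 1), (1 : ℝ) / q i := by
  obtain ⟨a, ha⟩ := exists_nat_ge N
  let q : ℕ → ℕ := fun k => Nat.nth Nat.Prime (k + a)
  have hmono : StrictMono (Nat.nth Nat.Prime) := Nat.nth_strictMono Nat.infinite_setOfPred_prime
  have hpr : ∀ k, (q k).Prime := fun k => Nat.prime_nth_prime _
  have hns : ¬ Summable (fun k => (1 : ℝ) / q k) := by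
    intro h
    have h2 := (summable_nat_add_iff (f := fun k => (1 : ℝ) / Nat.nth Nat.Prime k) a).1 h
    apply not_summable_one_div_on_primes
    rw [← hmono.injective.summable_iff]
    · refine h2.congr fun k => ?_
      simp [Nat.prime_nth_prime]
    · intro n hn
      apply Set.indicator_of_notMem
      intro hp
      exact hn ⟨_, Nat.nth_count hp⟩
  have hex : ∃ m, ℓ ≤ ∑ i ∈ Finset.range (m + 1), (1 : ℝ) / q i := by
    have := (not_summable_iff_tendsto_nat_atTop_of_nonneg (fun k => by positivity)).1 hns
    obtain ⟨m, hm⟩ := ((tendsto_add_atTop_iff_nat 1).2 this |>.eventually_ge_atTop ℓ).exists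
    exact ⟨m, hm⟩
  classical
  refine ⟨Nat.find hex, q, fun i j h => hmono (by omega), hpr, ?_, ?_, Nat.find_spec hex⟩
  · refine ha.trans ?_
    have : a ≤ q (Nat.find hex) := le_trans (by omega) (hmono.le_apply)
    exact_mod_cast this
  · rcases h : Nat.find hex with _ | m
    · simpa using hℓ
    · exact not_le.1 (Nat.find_min hex (m := m) (by omega))

theorem stmt_0 (ℓ θ : ℝ) (hℓ : 0 < ℓ) (hθ : 0 < θ) :
    ∃ p : ℕ → ℕ, StrictMono p ∧ (∀ k, (p k).Prime) ∧
      HasSum (fun k => (1 : ℝ) / (p k)) ℓ ∧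
      ∃ c : ℝ, 0 < c ∧ ∀ k, c * θ ^ k ≤ (p k : ℝ) := by
  obtain ⟨N, hN1, hN⟩ := greedy (le_max_right θ 2)
  set T := max θ 2 with hT
  have hT1 : 1 ≤ T := le_trans (by norm_num) (le_max_right θ 2)
  have hT0 : 0 < T := by linarith
  obtain ⟨m, q, hqm, hqp, hqN, h1, h2⟩ := initial hℓ hN1
  rw [Finset.sum_range_succ] at h2
  set A := ∑ i ∈ Finset.range m, (1 : ℝ) / q i with hA
  have hr : 0 < ℓ - A := by linarith
  have hr2 : ℓ - A ≤ 1 / q m := by linarith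
  have hqm0 : (0:ℝ) < q m := by exact_mod_cast (hqp m).pos
  obtain ⟨s, hsm, hsp, hss, hsb⟩ := hN (ℓ - A) hr
    (hr2.trans (one_div_le_one_div_of_le (by linarith) hqN))
  have hs0 : q m ≤ s 0 := by
    have : (q m : ℝ) ≤ s 0 := by
      refine le_trans ?_ (hsb 0)
      rw [pow_zero, le_div_iff₀ hr]
      rw [le_div_iff₀ hqm0] at hr2
      linarith
    exact_mod_cast this
  refine ⟨fun k => if k < m then q k else s (k - m), ?_, ?_, ?_, ?_⟩
  · intro i j hij
    dsimp only
    split_ifs with hi hj hj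
    · exact hqm hij
    · exact (hqm hi).trans_le (hs0.trans (hsm.monotone (Nat.zero_le _)))
    · omega
    · exact hsm (by omega)
  · intro k
    dsimp only
    split_ifs
    · exact hqp k
    · exact hsp _
  · rw [← hasSum_nat_add_iff' m]
    have : ∑ i ∈ Finset.range m, (1 : ℝ) / ((if i < m then q i else s (i - m) : ℕ) : ℝ) = A := by
      refine Finset.sum_congr rfl fun i hi => ?_
      rw [if_pos (Finset.mem_range.1 hi)]
    rw [this]
    simpa using hss
  · refine ⟨min (1 / (ℓ - A)) 1 / T ^ m, by positivity, fun k => ?_⟩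
    have hk : θ ^ k ≤ T ^ k := pow_le_pow_left₀ hθ.le (le_max_left _ _) k
    refine (mul_le_mul_of_nonneg_left hk (by positivity)).trans ?_
    dsimp only
    split_ifs with h
    · calc min (1 / (ℓ - A)) 1 / T ^ m * T ^ k ≤ 1 / T ^ m * T ^ m := by
            gcongr
            exact min_le_right _ _
        _ = 1 := by field_simp
        _ ≤ _ := by exact_mod_cast (hqp k).one_lt.le
    · refine le_trans ?_ (hsb (k - m))
      have e : T ^ k = T ^ (k - m) * T ^ m := by rw [← pow_add]; congr 1; omega
      calc min (1 / (ℓ - A)) 1 / T ^ m * T ^ k ≤ 1 / (ℓ - A) / T ^ m * T ^ k := by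
            gcongr
            exact min_le_left _ _
        _ = _ := by rw [e]; field_simp
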